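/- Let a, b ∈ ℝ with sin(π(a+b)) ≠ 0, sin(πa) ≠ 0 and sin(πb) ≠ 0, and define B ∈ M₂(ℂ) by B = (1/(i·sin(π(a+b)))) · [[cos(π(a−b)) − e^{iπ(a+b)}, 2 sin(πa) sin(πb)], [2 e^{2πi(a+b)} sin(πa) sin(πb), e^{iπ(a+b)}(e^{2πia} + e^{2πib} − 2)/2]]. Then for real numbers c₁, c₂, the Hermitian form c₁|z₁|² + c₂|z₂|² on ℂ² is invariant under z ↦ Bz (equivalently Bᴴ·diag(c₁,c₂)·B = diag(c₁,c₂)) if and only if c₂ = −c₁. -/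

import Mathlib

/-!
Put `s = sin π(a+b)`, `S = 2 sin πa sin πb = cos π(a-b) - cos π(a+b)` and `u = e^{2πi(a+b)}`,
so `|u| = 1`. The addition formulas give
`B = (1/(i s)) [[S - i s, S], [u S, u (S + i s)]]` (`Bmon_eq`). With `D = diag(c₁, c₂)`, this yields
`Bᴴ D B - D = ((c₁ + c₂) S / s²) [[S, S + i s], [S - i s, S]]` (`conj_form_sub`),
which vanishes if and only if `c₁ + c₂ = 0`, because `S ≠ 0`.
-/

open Complex Real Matrix

/-- The monodromy matrix `B` around `z = ∞` acting on the hypergeometric solutions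
`F₁, F₂`. -/
noncomputable def Bmon (a b : ℝ) : Matrix (Fin 2) (Fin 2) ℂ :=
  (1 / (Complex.I * (Real.sin (π * (a + b)) : ℂ))) •
    !![(Real.cos (π * (a - b)) : ℂ) - Complex.exp (Complex.I * π * (a + b)),
        2 * (Real.sin (π * a) : ℂ) * (Real.sin (π * b) : ℂ);
      2 * Complex.exp (2 * π * Complex.I * (a + b)) *
          (Real.sin (π * a) : ℂ) * (Real.sin (π * b) : ℂ),
        Complex.exp (π * Complex.I * (a + b)) *
          (Complex.exp (2 * π * Complex.I * a) + Complex.exp (2 * π * Complex.I * b) - 2) / 2]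

/-- The monodromy matrix in a form where its pseudo-unitarity is visible. -/
lemma Bmon_eq (a b : ℝ) :
    Bmon a b = (1 / (Complex.I * (Real.sin (π * (a + b)) : ℂ))) •
      !![((2 * Real.sin (π * a) * Real.sin (π * b) : ℝ) : ℂ)
            - Complex.I * (Real.sin (π * (a + b)) : ℂ),
          ((2 * Real.sin (π * a) * Real.sin (π * b) : ℝ) : ℂ);
        Complex.exp (2 * π * Complex.I * (a + b)) *
            ((2 * Real.sin (π * a) * Real.sin (π * b) : ℝ) : ℂ),
          Complex.exp (2 * π * Complex.I * (a + b)) *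
            (((2 * Real.sin (π * a) * Real.sin (π * b) : ℝ) : ℂ)
              + Complex.I * (Real.sin (π * (a + b)) : ℂ))] := by
  have hE (x : ℝ) : Complex.exp (π * Complex.I * x)
      = Complex.cos (π * x) + Complex.sin (π * x) * Complex.I := by
    rw [← Complex.exp_mul_I]; ring_nf
  have h1 : Complex.exp (Complex.I * π * (a + b))
      = Complex.exp (π * Complex.I * a) * Complex.exp (π * Complex.I * b) := by
    rw [← Complex.exp_add]; ring_nf
  have h1' : Complex.exp (π * Complex.I * (a + b))
      = Complex.exp (π * Complex.I * a) * Complex.exp (π * Complex.I * b) := by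
    rw [← Complex.exp_add]; ring_nf
  have h2 (x : ℂ) : Complex.exp (2 * π * Complex.I * x) = Complex.exp (π * Complex.I * x) ^ 2 := by
    rw [← Complex.exp_nat_mul]; push_cast; ring_nf
  have pa := Complex.sin_sq_add_cos_sq (π * a)
  have pb := Complex.sin_sq_add_cos_sq (π * b)
  have hI := Complex.I_sq
  unfold Bmon
  congr 1
  ext i j
  fin_cases i <;> fin_cases j <;>
    simp only [h2, h1, h1', hE, Fin.zero_eta, Fin.mk_one, Matrix.of_apply, Matrix.cons_val',
      Matrix.cons_val_zero, Matrix.cons_val_one, Matrix.cons_val_fin_one] <;>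
    clear h1 h1' h2 hE <;>
    simp only [mul_add π, mul_sub π, Real.cos_sub, Real.sin_add, Complex.ofReal_add,
      Complex.ofReal_mul, Complex.ofReal_sin, Complex.ofReal_cos, Complex.ofReal_ofNat] <;>
    generalize Complex.sin (π * a) = x at * <;> generalize Complex.cos (π * a) = y at * <;>
    generalize Complex.sin (π * b) = z at * <;> generalize Complex.cos (π * b) = w at * <;>
    grind

/-- The defect of invariance is proportional to `c₁ + c₂`. -/
lemma conj_form_sub (s S c₁ c₂ : ℝ) (u : ℂ) (hs : s ≠ 0) (hu : (starRingEnd ℂ) u * u = 1) :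
    ((1 / (Complex.I * (s : ℂ))) •
        !![(S : ℂ) - Complex.I * s, (S : ℂ); u * S, u * (S + Complex.I * s)])ᴴ *
      !![(c₁ : ℂ), 0; 0, (c₂ : ℂ)] *
      ((1 / (Complex.I * (s : ℂ))) •
        !![(S : ℂ) - Complex.I * s, (S : ℂ); u * S, u * (S + Complex.I * s)])
      - !![(c₁ : ℂ), 0; 0, (c₂ : ℂ)] =
    ((c₁ + c₂) * S / s ^ 2 : ℂ) •
      !![(S : ℂ), S + Complex.I * s; S - Complex.I * s, S] := by
  have hs' : (s : ℂ) ≠ 0 := by exact_mod_cast hs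
  have hI := Complex.I_sq
  have hI0 := Complex.I_ne_zero
  ext i j
  fin_cases i <;> fin_cases j <;>
    simp [Matrix.mul_apply, Fin.sum_univ_two, Matrix.conjTranspose_apply] <;>
    field_simp <;> generalize (starRingEnd ℂ) u = v at * <;> grind

/-- The Hermitian form `c₁|z₁|² + c₂|z₂|²` is invariant under the hypergeometric
monodromy matrix `B` if and only if `c₂ = −c₁`. -/
theorem monodromy_invariant_form_iff (a b : ℝ) (hab : Real.sin (π * (a + b)) ≠ 0)
    (ha : Real.sin (π * a) ≠ 0) (hb : Real.sin (π * b) ≠ 0) (c₁ c₂ : ℝ) :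
    (Bmon a b)ᴴ * !![(c₁ : ℂ), 0; 0, (c₂ : ℂ)] * Bmon a b = !![(c₁ : ℂ), 0; 0, (c₂ : ℂ)]
      ↔ c₂ = -c₁ := by
  have hu : (starRingEnd ℂ) (Complex.exp (2 * π * Complex.I * (a + b))) *
      Complex.exp (2 * π * Complex.I * (a + b)) = 1 := by
    rw [← Complex.exp_conj, ← Complex.exp_add]
    simp [Complex.conj_ofNat]
  have hS : ((2 * Real.sin (π * a) * Real.sin (π * b) : ℝ) : ℂ) ≠ 0 := by
    exact_mod_cast mul_ne_zero (mul_ne_zero two_ne_zero ha) hb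
  have hs : (Real.sin (π * (a + b)) : ℂ) ≠ 0 := by exact_mod_cast hab
  rw [Bmon_eq, ← sub_eq_zero, conj_form_sub _ _ _ _ _ hab hu]
  constructor
  · intro h
    have h00 := congrFun (congrFun h 0) 0
    simp only [Matrix.smul_apply, Matrix.of_apply, Matrix.cons_val', Matrix.cons_val_zero,
      Matrix.cons_val_fin_one, smul_eq_mul, Matrix.zero_apply, mul_eq_zero, div_eq_zero_iff, hS,
      hs, pow_eq_zero_iff, ne_eq, OfNat.ofNat_ne_zero, not_false_eq_true, or_false] at h00
    have : c₁ + c₂ = 0 := by exact_mod_cast h00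
    linarith
  · rintro rfl
    simp
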